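/- (Feedback passivation, Theorem 4.2.) Let γ ∈ (0,1) and let A ∈ ℝ^{n×n}, B ∈ ℝ^{n×m}, C ∈ ℝ^{m×n}, D ∈ ℝ^{m×m}, F ∈ ℝ^{m×n}, G ∈ ℝ^{m×m}. Let P be a real symmetric positive definite n×n matrix, and set X = P⁻¹ and Q = F·X. Assume the symmetric block matrix [[A·X + X·Aᵀ + B·Q + Qᵀ·Bᵀ, B·G − X·Cᵀ − Qᵀ·Dᵀ], [(B·G − X·Cᵀ − Qᵀ·Dᵀ)ᵀ, −D·G − Gᵀ·Dᵀ]] is negative semidefinite. Then for every continuously differentiable x : [0,∞) → ℝⁿ and continuous v : [0,∞) → ℝᵐ satisfying the closed-loop dynamics (D^γ x)(t) = (A + B·F)·x(t) + B·G·v(t) for all t ≥ 0 (Caputo derivative componentwise), the output y(t) = (C + D·F)·x(t) + D·G·v(t) and storage function V(t) = (1/2)·x(t)ᵀ P x(t) satisfy the passivity inequality (D^γ V)(t) ≤ ⟨v(t), y(t)⟩ for all t ≥ 0. -/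

import Mathlib

open MeasureTheory intervalIntegral Matrix

/-- Caputo fractional derivative of order `γ` of a real-valued function `g`. -/
noncomputable def caputo (γ : ℝ) (g : ℝ → ℝ) (t : ℝ) : ℝ :=
  (1 / Real.Gamma (1 - γ)) * ∫ s in (0:ℝ)..t, (t - s) ^ (-γ) * deriv g s

/-- Componentwise Caputo fractional derivative of a vector-valued function. -/
noncomputable def caputoVec {n : ℕ} (γ : ℝ) (x : ℝ → Fin n → ℝ) (t : ℝ) : Fin n → ℝ :=
  fun i => caputo γ (fun s => x s i) t

/-! The subgradient inequality for the storage function `V` shows that `V (x s) - P x(t) ⬝ᵥ x s` is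
minimal over `s ∈ [0, t]` at `s = t`, so the extremum principle for the Caputo derivative gives
`D^γ V (t) ≤ P x(t) ⬝ᵥ D^γ x (t)`. In the coordinate `z = P x(t)`, the difference between the
right-hand side and the supply rate `⟨v, y⟩` is half of the quadratic form of the matrix
inequality, evaluated at `(z, v)`. -/

section Caputo

variable {γ t : ℝ}

lemma intervalIntegrable_rpow_sub_mul_deriv (hγ : γ < 1) (ht : 0 ≤ t) {g : ℝ → ℝ}
    (hg : ContDiffOn ℝ 1 g (Set.Icc 0 t)) :
    IntervalIntegrable (fun s => (t - s) ^ (-γ) * deriv g s) volume 0 t := by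
  rcases ht.eq_or_lt with rfl | ht
  · exact IntervalIntegrable.refl
  have kernel_integrable : IntervalIntegrable (fun s => (t - s) ^ (-γ)) volume 0 t := by
    simpa only [sub_self, sub_zero] using
      (intervalIntegrable_rpow' (a := t) (b := 0) (by linarith : -1 < -γ)).comp_sub_left t
  have derivWithin_continuousOn : ContinuousOn (derivWithin g (Set.Icc 0 t)) (Set.uIcc 0 t) := by
    simpa only [Set.uIcc_of_le ht.le] using
      hg.continuousOn_derivWithin (uniqueDiffOn_Icc ht) le_rfl
  refine (kernel_integrable.mul_continuousOn derivWithin_continuousOn).congr_uIoo fun s hs => ?_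
  rw [Set.uIoo_of_le ht.le] at hs
  simp only [derivWithin_of_mem_nhds (Icc_mem_nhds hs.1 hs.2)]

lemma hasDerivAt_of_contDiffOn_Icc {a b s : ℝ} {g : ℝ → ℝ} (hg : ContDiffOn ℝ 1 g (Set.Icc a b))
    (hs : s ∈ Set.Ioo a b) : HasDerivAt g (deriv g s) s :=
  (hg.differentiableOn one_ne_zero).hasDerivAt (Icc_mem_nhds hs.1 hs.2)

lemma caputo_sub (hγ : γ < 1) (ht : 0 ≤ t) {f g : ℝ → ℝ} (hf : ContDiffOn ℝ 1 f (Set.Icc 0 t))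
    (hg : ContDiffOn ℝ 1 g (Set.Icc 0 t)) :
    caputo γ (fun s => f s - g s) t = caputo γ f t - caputo γ g t := by
  simp only [caputo]
  rw [← mul_sub, ← integral_sub (intervalIntegrable_rpow_sub_mul_deriv hγ ht hf)
    (intervalIntegrable_rpow_sub_mul_deriv hγ ht hg)]
  congr 1
  refine integral_congr_Ioo_of_le ht fun s hs => ?_
  have hasDerivAt_sub :=
    (hasDerivAt_of_contDiffOn_Icc hf hs).fun_sub (hasDerivAt_of_contDiffOn_Icc hg hs)
  simp only [hasDerivAt_sub.deriv, mul_sub]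

lemma caputo_dotProduct (hγ : γ < 1) (ht : 0 ≤ t) {n : ℕ} (c : Fin n → ℝ) {x : ℝ → Fin n → ℝ}
    (hx : ContDiffOn ℝ 1 x (Set.Icc 0 t)) :
    caputo γ (fun s => c ⬝ᵥ x s) t = c ⬝ᵥ caputoVec γ x t := by
  have hxi : ∀ i, ContDiffOn ℝ 1 (fun s => x s i) (Set.Icc 0 t) := contDiffOn_pi.1 hx
  have integral_deriv_dotProduct :
      ∫ s in 0..t, (t - s) ^ (-γ) * deriv (fun s => c ⬝ᵥ x s) s =
        ∑ i, c i * ∫ s in 0..t, (t - s) ^ (-γ) * deriv (fun s => x s i) s := by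
    simp_rw [← intervalIntegral.integral_const_mul]
    rw [← integral_finsetSum fun i _ =>
      (intervalIntegrable_rpow_sub_mul_deriv hγ ht (hxi i)).const_mul (c i)]
    refine integral_congr_Ioo_of_le ht fun s hs => ?_
    have hasDerivAt_dotProduct :
        HasDerivAt (fun s => c ⬝ᵥ x s) (∑ i, c i * deriv (fun s => x s i) s) s :=
      HasDerivAt.fun_sum fun i _ => (hasDerivAt_of_contDiffOn_Icc (hxi i) hs).const_mul (c i)
    simp only [hasDerivAt_dotProduct.deriv, Finset.mul_sum, mul_left_comm]
  rw [caputo, integral_deriv_dotProduct, Finset.mul_sum]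
  exact Finset.sum_congr rfl fun i _ => mul_left_comm _ _ _

lemma continuousOn_rpow_sub_mul_sub (hγ : γ < 1) {a : ℝ} {g : ℝ → ℝ}
    (hg : DifferentiableOn ℝ g (Set.Icc a t)) :
    ContinuousOn (fun s => (t - s) ^ (-γ) * (g s - g t)) (Set.Icc a t) := by
  intro s hs
  rcases hs.2.eq_or_lt with rfl | hst
  · have isBigO_sub : (fun r => g r - g s) =O[nhdsWithin s (Set.Icc a s)] fun r => s - r := by
      simpa only [neg_sub] using (hg s hs).isBigO_sub.neg_right
    have mul_eq_rpow : (fun r => (s - r) ^ (-γ) * (s - r)) =ᶠ[nhdsWithin s (Set.Icc a s)]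
        fun r => (s - r) ^ (-γ + 1) := by
      filter_upwards [self_mem_nhdsWithin] with r hr
      exact (Real.rpow_add_one' (sub_nonneg.2 hr.2) (by linarith)).symm
    have isBigO_rpow : (fun r => (s - r) ^ (-γ) * (g r - g s)) =O[nhdsWithin s (Set.Icc a s)]
        fun r => (s - r) ^ (-γ + 1) :=
      ((Asymptotics.isBigO_refl _ _).mul isBigO_sub).trans_eventuallyEq mul_eq_rpow
    have rpow_continuous : Continuous fun r => (s - r) ^ (-γ + 1) :=
      (continuous_const.sub continuous_id).rpow_const fun _ => Or.inr (by linarith)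
    have tendsto_rpow : Filter.Tendsto (fun r => (s - r) ^ (-γ + 1)) (nhdsWithin s (Set.Icc a s))
        (nhds 0) := by
      simpa only [sub_self, Real.zero_rpow (by linarith : -γ + 1 ≠ 0)] using
        (rpow_continuous.tendsto s).mono_left nhdsWithin_le_nhds
    simpa only [ContinuousWithinAt, sub_self, mul_zero] using
      isBigO_rpow.trans_tendsto tendsto_rpow
  · have kernel_continuous : ContinuousWithinAt (fun s => (t - s) ^ (-γ)) (Set.Icc a t) s :=
      (continuousWithinAt_const.sub continuousWithinAt_id).rpow_const
        (Or.inl (sub_pos.2 hst).ne')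
    exact kernel_continuous.mul ((hg s hs).continuousWithinAt.sub continuousWithinAt_const)

lemma caputo_nonpos_of_isMinOn (hγ₀ : 0 ≤ γ) (hγ₁ : γ < 1) (ht : 0 ≤ t) {g : ℝ → ℝ}
    (hg : ContDiffOn ℝ 1 g (Set.Icc 0 t)) (hmin : IsMinOn g (Set.Icc 0 t) t) :
    caputo γ g t ≤ 0 := by
  have sub_nonneg_of_mem : ∀ s ∈ Set.Icc 0 t, 0 ≤ g s - g t := fun s hs => sub_nonneg.2 (hmin hs)
  have hasDerivAt_product : ∀ s ∈ Set.Ioo 0 t,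
      HasDerivAt (fun s => (t - s) ^ (-γ) * (g s - g t))
        (γ * (t - s) ^ (-γ - 1) * (g s - g t) + (t - s) ^ (-γ) * deriv g s) s := by
    intro s hs
    have hasDerivAt_rpow : HasDerivAt (fun s => (t - s) ^ (-γ)) (γ * (t - s) ^ (-γ - 1)) s := by
      simpa using ((hasDerivAt_id s).const_sub t).rpow_const (p := -γ)
        (Or.inl (sub_pos.2 hs.2).ne')
    exact hasDerivAt_rpow.mul ((hasDerivAt_of_contDiffOn_Icc hg hs).sub_const (g t))
  -- The product vanishes at `t`, is nonnegative at `0`, and its derivative dominates the integrand.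
  have integral_le : ∫ s in 0..t, (t - s) ^ (-γ) * deriv g s ≤
      (t - t) ^ (-γ) * (g t - g t) - (t - 0) ^ (-γ) * (g 0 - g t) := by
    refine integral_le_sub_of_hasDeriv_right_of_le ht
      (continuousOn_rpow_sub_mul_sub hγ₁ (hg.differentiableOn one_ne_zero))
      (fun s hs => (hasDerivAt_product s hs).hasDerivWithinAt)
      ((intervalIntegrable_iff_integrableOn_Icc_of_le ht).1
        (intervalIntegrable_rpow_sub_mul_deriv hγ₁ ht hg)) fun s hs => ?_
    have := sub_nonneg_of_mem s (Set.Ioo_subset_Icc_self hs)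
    have := Real.rpow_nonneg (sub_nonneg.2 hs.2.le) (-γ - 1)
    exact le_add_of_nonneg_left (by positivity)
  have boundary_nonneg : 0 ≤ (t - 0) ^ (-γ) * (g 0 - g t) :=
    mul_nonneg (Real.rpow_nonneg (sub_nonneg.2 ht) _)
      (sub_nonneg_of_mem 0 (Set.left_mem_Icc.2 ht))
  have Gamma_pos : 0 < Real.Gamma (1 - γ) := Real.Gamma_pos_of_pos (sub_pos.2 hγ₁)
  exact mul_nonpos_of_nonneg_of_nonpos (one_div_pos.2 Gamma_pos).le (by linarith)

lemma contDiffOn_dotProduct {𝕜 E ι : Type*} [NontriviallyNormedField 𝕜] [NormedAddCommGroup E]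
    [NormedSpace 𝕜 E] [Fintype ι] {k : WithTop ℕ∞} {S : Set E} {f g : E → ι → 𝕜}
    (hf : ContDiffOn 𝕜 k f S) (hg : ContDiffOn 𝕜 k g S) :
    ContDiffOn 𝕜 k (fun s => f s ⬝ᵥ g s) S :=
  ContDiffOn.sum fun i _ => (contDiffOn_pi.1 hf i).mul (contDiffOn_pi.1 hg i)

lemma caputo_le_dotProduct_caputoVec_of_subgradient (hγ₀ : 0 ≤ γ) (hγ₁ : γ < 1) (ht : 0 ≤ t)
    {n : ℕ} {c : Fin n → ℝ} {x : ℝ → Fin n → ℝ} (hx : ContDiffOn ℝ 1 x (Set.Icc 0 t))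
    {V : ℝ → ℝ} (hV : ContDiffOn ℝ 1 V (Set.Icc 0 t))
    (hc : ∀ s ∈ Set.Icc 0 t, V t + c ⬝ᵥ (x s - x t) ≤ V s) :
    caputo γ V t ≤ c ⬝ᵥ caputoVec γ x t := by
  have hcx : ContDiffOn ℝ 1 (fun s => c ⬝ᵥ x s) (Set.Icc 0 t) :=
    contDiffOn_dotProduct contDiffOn_const hx
  have isMinOn_sub : IsMinOn (fun s => V s - c ⬝ᵥ x s) (Set.Icc 0 t) t := by
    refine isMinOn_iff.2 fun s hs => ?_
    have subgradient := hc s hs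
    rw [dotProduct_sub] at subgradient
    linarith
  rw [← sub_nonpos, ← caputo_dotProduct hγ₁ ht c hx, ← caputo_sub hγ₁ ht hV hcx]
  exact caputo_nonpos_of_isMinOn hγ₀ hγ₁ ht (hV.sub hcx) isMinOn_sub

end Caputo

lemma half_quadraticForm_subgradient {ι : Type*} [Fintype ι] {P : Matrix ι ι ℝ}
    (hP : P.PosSemidef) (a b : ι → ℝ) :
    1 / 2 * (a ⬝ᵥ P *ᵥ a) + P *ᵥ a ⬝ᵥ (b - a) ≤ 1 / 2 * (b ⬝ᵥ P *ᵥ b) := by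
  have dotProduct_mulVec_symm : b ⬝ᵥ P *ᵥ a = a ⬝ᵥ P *ᵥ b := by
    rw [← dotProduct_transpose_mulVec, ← conjTranspose_eq_transpose_of_trivial, hP.isHermitian.eq]
  have quadraticForm_sub_nonneg : 0 ≤ (b - a) ⬝ᵥ P *ᵥ (b - a) := by
    simpa only [star_trivial] using hP.dotProduct_mulVec_nonneg (b - a)
  simp only [mulVec_sub, dotProduct_sub, sub_dotProduct, dotProduct_mulVec_symm]
    at quadraticForm_sub_nonneg
  rw [dotProduct_comm (P *ᵥ a), sub_dotProduct, dotProduct_mulVec_symm]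
  linarith

lemma caputo_half_quadraticForm_le {γ t : ℝ} (hγ₀ : 0 ≤ γ) (hγ₁ : γ < 1) (ht : 0 ≤ t) {n : ℕ}
    {P : Matrix (Fin n) (Fin n) ℝ} (hP : P.PosSemidef) {x : ℝ → Fin n → ℝ}
    (hx : ContDiffOn ℝ 1 x (Set.Icc 0 t)) :
    caputo γ (fun s => 1 / 2 * (x s ⬝ᵥ P *ᵥ x s)) t ≤ P *ᵥ x t ⬝ᵥ caputoVec γ x t := by
  have hPx : ContDiffOn ℝ 1 (fun s => P *ᵥ x s) (Set.Icc 0 t) :=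
    P.mulVecLin.toContinuousLinearMap.contDiff.comp_contDiffOn hx
  have hV : ContDiffOn ℝ 1 (fun s => 1 / 2 * (x s ⬝ᵥ P *ᵥ x s)) (Set.Icc 0 t) :=
    contDiffOn_const.mul (contDiffOn_dotProduct hx hPx)
  exact caputo_le_dotProduct_caputoVec_of_subgradient hγ₀ hγ₁ ht hx hV
    fun s _ => half_quadraticForm_subgradient hP (x t) (x s)

section MatrixInequality

variable {R ι κ : Type*} [Fintype ι] [Fintype κ]

/-- The symmetric block matrix of the passivity (positive-real) inequality for a system with state
map `M z + N v` and output `K z + L v`: its quadratic form at `(z, v)` is twice the difference of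
`⟨z, M z + N v⟩` and the supply rate `⟨v, K z + L v⟩`. -/
def passivityMatrix [AddGroup R] (M : Matrix ι ι R) (N : Matrix ι κ R) (K : Matrix κ ι R)
    (L : Matrix κ κ R) : Matrix (ι ⊕ κ) (ι ⊕ κ) R :=
  fromBlocks (M + Mᵀ) (N - Kᵀ) (N - Kᵀ)ᵀ (-L - Lᵀ)

lemma dotProduct_passivityMatrix_mulVec [CommRing R] (M : Matrix ι ι R) (N : Matrix ι κ R)
    (K : Matrix κ ι R) (L : Matrix κ κ R) (z : ι → R) (v : κ → R) :
    Sum.elim z v ⬝ᵥ passivityMatrix M N K L *ᵥ Sum.elim z v =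
      2 * (z ⬝ᵥ (M *ᵥ z + N *ᵥ v) - v ⬝ᵥ (K *ᵥ z + L *ᵥ v)) := by
  simp only [passivityMatrix, fromBlocks_mulVec, sumElim_dotProduct_sumElim, Sum.elim_comp_inl,
    Sum.elim_comp_inr, transpose_sub, transpose_transpose, add_mulVec, sub_mulVec, neg_mulVec,
    dotProduct_add, dotProduct_sub, dotProduct_neg, dotProduct_transpose_mulVec]
  ring

lemma dotProduct_le_supplyRate_of_posSemidef {M : Matrix ι ι ℝ} {N : Matrix ι κ ℝ}
    {K : Matrix κ ι ℝ} {L : Matrix κ κ ℝ} (h : (-passivityMatrix M N K L).PosSemidef)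
    (z : ι → ℝ) (v : κ → ℝ) :
    z ⬝ᵥ (M *ᵥ z + N *ᵥ v) ≤ v ⬝ᵥ (K *ᵥ z + L *ᵥ v) := by
  have quadraticForm_nonneg := h.dotProduct_mulVec_nonneg (Sum.elim z v)
  rw [star_trivial, neg_mulVec, dotProduct_neg, dotProduct_passivityMatrix_mulVec]
    at quadraticForm_nonneg
  linarith

lemma fromBlocks_feedback_eq_passivityMatrix [CommRing R] (A : Matrix ι ι R) (B : Matrix ι κ R)
    (C : Matrix κ ι R) (D : Matrix κ κ R) (F : Matrix κ ι R) (G : Matrix κ κ R)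
    {X : Matrix ι ι R} (hX : X.IsSymm) :
    fromBlocks (A * X + X * Aᵀ + B * (F * X) + (F * X)ᵀ * Bᵀ)
        (B * G - X * Cᵀ - (F * X)ᵀ * Dᵀ) (B * G - X * Cᵀ - (F * X)ᵀ * Dᵀ)ᵀ
        (-(D * G) - Gᵀ * Dᵀ) =
      passivityMatrix ((A + B * F) * X) (B * G) ((C + D * F) * X) (D * G) := by
  simp only [passivityMatrix, Matrix.add_mul, Matrix.mul_assoc, transpose_add, transpose_mul,
    hX.eq, sub_sub]
  congr 1
  abel

end MatrixInequality

theorem stmt_9_general {n m : ℕ} {γ : ℝ} (hγ : γ ∈ Set.Ico 0 1)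
    (A : Matrix (Fin n) (Fin n) ℝ) (B : Matrix (Fin n) (Fin m) ℝ)
    (C : Matrix (Fin m) (Fin n) ℝ) (D : Matrix (Fin m) (Fin m) ℝ)
    (F : Matrix (Fin m) (Fin n) ℝ) (G : Matrix (Fin m) (Fin m) ℝ)
    {P : Matrix (Fin n) (Fin n) ℝ} (hP : P.PosDef)
    {X : Matrix (Fin n) (Fin n) ℝ} (hX : X = P⁻¹)
    {Q : Matrix (Fin m) (Fin n) ℝ} (hQ : Q = F * X)
    (hLMI : (-(Matrix.fromBlocks
        (A * X + X * Aᵀ + B * Q + Qᵀ * Bᵀ) (B * G - X * Cᵀ - Qᵀ * Dᵀ)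
        (B * G - X * Cᵀ - Qᵀ * Dᵀ)ᵀ (-(D * G) - Gᵀ * Dᵀ))).PosSemidef)
    {t : ℝ} (ht : 0 ≤ t) {x : ℝ → Fin n → ℝ} (hx : ContDiffOn ℝ 1 x (Set.Icc 0 t))
    {v : Fin m → ℝ} (hdyn : caputoVec γ x t = (A + B * F) *ᵥ x t + (B * G) *ᵥ v) :
    caputo γ (fun s => 1 / 2 * (x s ⬝ᵥ P *ᵥ x s)) t ≤
      v ⬝ᵥ ((C + D * F) *ᵥ x t + (D * G) *ᵥ v) := by
  have X_isSymm : X.IsSymm := by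
    rw [hX, ← isHermitian_iff_isSymm]
    exact hP.isHermitian.inv
  have x_eq : X *ᵥ (P *ᵥ x t) = x t := by
    rw [hX, mulVec_mulVec, nonsing_inv_mul _ hP.det_pos.ne'.isUnit, one_mulVec]
  rw [hQ, fromBlocks_feedback_eq_passivityMatrix A B C D F G X_isSymm] at hLMI
  calc caputo γ (fun s => 1 / 2 * (x s ⬝ᵥ P *ᵥ x s)) t
      ≤ P *ᵥ x t ⬝ᵥ caputoVec γ x t := caputo_half_quadraticForm_le hγ.1 hγ.2 ht hP.posSemidef hx
    _ = P *ᵥ x t ⬝ᵥ (((A + B * F) * X) *ᵥ (P *ᵥ x t) + (B * G) *ᵥ v) := by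
        rw [hdyn, ← mulVec_mulVec _ _ X, x_eq]
    _ ≤ v ⬝ᵥ (((C + D * F) * X) *ᵥ (P *ᵥ x t) + (D * G) *ᵥ v) :=
        dotProduct_le_supplyRate_of_posSemidef hLMI (P *ᵥ x t) v
    _ = v ⬝ᵥ ((C + D * F) *ᵥ x t + (D * G) *ᵥ v) := by rw [← mulVec_mulVec _ _ X, x_eq]

/-- Feedback passivation (Theorem 4.2): if the LMI in `(X, Q) = (P⁻¹, F·P⁻¹)` is negative
semidefinite, then the closed-loop system `D^γ x = (A+BF)x + BGv` with output
`y = (C+DF)x + DGv` is passive with storage function `V = (1/2)xᵀPx`. -/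
theorem stmt_9 {n m : ℕ} (γ : ℝ) (hγ : γ ∈ Set.Ioo (0:ℝ) 1)
    (A : Matrix (Fin n) (Fin n) ℝ) (B : Matrix (Fin n) (Fin m) ℝ)
    (C : Matrix (Fin m) (Fin n) ℝ) (D : Matrix (Fin m) (Fin m) ℝ)
    (F : Matrix (Fin m) (Fin n) ℝ) (G : Matrix (Fin m) (Fin m) ℝ)
    (P : Matrix (Fin n) (Fin n) ℝ) (hP : P.PosDef)
    (X : Matrix (Fin n) (Fin n) ℝ) (hX : X = P⁻¹)
    (Q : Matrix (Fin m) (Fin n) ℝ) (hQ : Q = F * X)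
    (hLMI : (-(Matrix.fromBlocks
        (A * X + X * Aᵀ + B * Q + Qᵀ * Bᵀ) (B * G - X * Cᵀ - Qᵀ * Dᵀ)
        (B * G - X * Cᵀ - Qᵀ * Dᵀ)ᵀ (-(D * G) - Gᵀ * Dᵀ))).PosSemidef)
    (x : ℝ → Fin n → ℝ) (hx : ContDiff ℝ 1 x)
    (v : ℝ → Fin m → ℝ) (hv : Continuous v)
    (hdyn : ∀ t ≥ (0:ℝ),
      caputoVec γ x t = (A + B * F).mulVec (x t) + (B * G).mulVec (v t)) :
    ∀ t ≥ (0:ℝ),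
      caputo γ (fun s => (1 / 2) * (x s ⬝ᵥ P.mulVec (x s))) t ≤
        v t ⬝ᵥ ((C + D * F).mulVec (x t) + (D * G).mulVec (v t)) :=
  fun _ ht => stmt_9_general (Set.Ioo_subset_Ico_self hγ) A B C D F G hP hX hQ hLMI ht
    hx.contDiffOn (hdyn _ ht)
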